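/- Let ν be a partition, α a composition of |ν|, T ∈ Tab(ν,α), and R_α a ribbon with row lengths α_1,…,α_{ℓ(α)} from top to bottom in which consecutive rows share at most one column. Let φ_{R_α}(T) be the filling of R_α whose reading word (rows right to left, top to bottom) equals the word w_{T̂} = w_1⋯w_{|α|}, where w_u is the index of the row of T̂ containing the entry u. Then φ_{R_α}(T) is an LR tableau of content ν if and only if, whenever rows j and j+1 of R_α share a column, the number α_1+⋯+α_j belongs to the descent set of T̂. -/

import Mathlib

namespace RibbonSupport

/-- A partition: a weakly decreasing list of positive integers. -/
def IsPartition (a : List ℕ) : Prop := a.Pairwise (· ≥ ·) ∧ ∀ x ∈ a, 0 < x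

/-- All parts of the list are at least `m`. -/
def PartsGE (a : List ℕ) (m : ℕ) : Prop := ∀ x ∈ a, m ≤ x

/-- Dominance order `lam ⪯ mu` on partitions of the same size. -/
def DomLE (lam mu : List ℕ) : Prop :=
  lam.sum = mu.sum ∧ ∀ i, (lam.take i).sum ≤ (mu.take i).sum

/-- The number of nonzero parts. -/
def lenp (p : List ℕ) : ℕ := p.countP (fun x => decide (x ≠ 0))

/-- `p` is an overlapping partition for the monotone ribbon with row lengths `a`:
`p` has the same length as `a`, its last entry is `0`, and consecutive entries
decrease by `0` or `1`. -/
def IsOverlapSeq (a p : List ℕ) : Prop :=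
  p.length = a.length ∧ p.getD (a.length - 1) 0 = 0 ∧
    ∀ i, i + 1 < a.length →
      p.getD i 0 = p.getD (i + 1) 0 ∨ p.getD i 0 = p.getD (i + 1) 0 + 1

/-- Rows `i` and `i+1` (0-based, top to bottom) of `R_a^p` overlap
(share exactly one column) exactly when `p_i = p_{i+1} + 1`. -/
def ovOf (p : List ℕ) : ℕ → Bool := fun i => decide (p.getD i 0 = p.getD (i + 1) 0 + 1)

def rowOffset (a : List ℕ) (i : ℕ) : ℕ := (a.take i).sum

/-- `w` is the reading word (rows right-to-left, top to bottom) of a semistandard filling of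
the ribbon with row lengths `a` (top to bottom) in which consecutive rows `i`, `i+1` share
exactly one column when `ov i = true` and no column otherwise.  Semistandardness amounts to:
within each row block the word is weakly decreasing (rows weakly increase left to right), and
at each overlapping gap the word strictly increases (columns strictly increase downwards). -/
def IsRibbonWord (a : List ℕ) (ov : ℕ → Bool) (w : List ℕ) : Prop :=
  w.length = a.sum ∧
  (∀ i j, i < a.length → j + 1 < a.getD i 0 →
    w.getD (rowOffset a i + j + 1) 0 ≤ w.getD (rowOffset a i + j) 0) ∧
  (∀ i, i + 1 < a.length → ov i = true →
    w.getD (rowOffset a (i + 1) - 1) 0 < w.getD (rowOffset a (i + 1)) 0)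

/-- Yamanouchi (lattice) word: each prefix has at least as many letters `j` as `j+1`. -/
def IsYam (w : List ℕ) : Prop := ∀ k j, (w.take k).count (j + 2) ≤ (w.take k).count (j + 1)

/-- The word `w` has content `nu` (and only positive letters). -/
def HasContent (w : List ℕ) (nu : List ℕ) : Prop :=
  (∀ j, w.count (j + 1) = nu.getD j 0) ∧ w.count 0 = 0

/-- There is an LR filling of the ribbon `(a, ov)` with content `nu`. -/
def InSupportOv (a : List ℕ) (ov : ℕ → Bool) (nu : List ℕ) : Prop :=
  ∃ w : List ℕ, IsRibbonWord a ov w ∧ IsYam w ∧ HasContent w nu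

/-- `nu` is in the Schur support of the monotone ribbon `R_a^p`. -/
def InSupport (a p nu : List ℕ) : Prop := InSupportOv a (ovOf p) nu

/-- `nu` is in the Schur support of the connected ribbon `R_a`. -/
def InSupportConn (a nu : List ℕ) : Prop := InSupportOv a (fun _ => true) nu

/-- `nu` belongs to the Schur interval `[a, (|a| - p₁, p₁)]` in dominance order. -/
def InInterval (a p nu : List ℕ) : Prop :=
  DomLE a nu ∧ DomLE nu [a.sum - p.getD 0 0, p.getD 0 0]

/-- The Schur support of `R_a^p`, as a set of partitions. -/
def SupportSet (a p : List ℕ) : Set (List ℕ) := {nu | IsPartition nu ∧ InSupport a p nu}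

/-- The Schur interval of `R_a^p`, as a set of partitions. -/
def IntervalSet (a p : List ℕ) : Set (List ℕ) := {nu | IsPartition nu ∧ InInterval a p nu}

/-- `R_a^p` has full Schur support. -/
def FullSupport (a p : List ℕ) : Prop := SupportSet a p = IntervalSet a p

/-- The Schur support of the connected ribbon `R_a`, as a set of partitions. -/
def SupportSetConn (a : List ℕ) : Set (List ℕ) := {nu | IsPartition nu ∧ InSupportConn a nu}

/-- `ϱ_i` (1-based `i`): `Σ_{q=i+1}^{ℓ(a)} a_q − p_{i+1} + 1`. -/
def rho (a p : List ℕ) (i : ℕ) : ℕ := (a.drop i).sum + 1 - p.getD i 0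

/-- Entry `j` (1-based) of the `i`-witness vector: `[ϱ_i − a_j]₊`. -/
def wit (a p : List ℕ) (i j : ℕ) : ℕ := rho a p i - a.getD (j - 1) 0

/-- Size of the `i`-witness vector. -/
def witSize (a p : List ℕ) (i : ℕ) : ℕ := ∑ j ∈ Finset.Icc 1 i, wit a p i j

/-! ### Tableaux -/

/-- Cells (0-based `(row, column)`) of the Young diagram of `lam`. -/
def cells (lam : List ℕ) : Finset (ℕ × ℕ) :=
  (Finset.range lam.length ×ˢ Finset.range (lam.sum + 1)).filter
    (fun x => x.2 < lam.getD x.1 0)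

/-- `T` is a semistandard Young tableau of shape `lam` and content `al`
(normalized to vanish off the diagram). -/
def IsTab (lam al : List ℕ) (T : ℕ × ℕ → ℕ) : Prop :=
  (∀ x, x ∉ cells lam → T x = 0) ∧
  (∀ x ∈ cells lam, 1 ≤ T x) ∧
  (∀ i c, (i, c + 1) ∈ cells lam → T (i, c) ≤ T (i, c + 1)) ∧
  (∀ i c, (i + 1, c) ∈ cells lam → T (i, c) < T (i + 1, c)) ∧
  (∀ k, ((cells lam).filter (fun x => T x = k + 1)).card = al.getD k 0)

/-- Standardization of a tableau: entries are renumbered `1, …, N` in increasing order of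
value, entries of equal value being numbered from southwest to northeast (by column). -/
def stdz (lam : List ℕ) (T : ℕ × ℕ → ℕ) : ℕ × ℕ → ℕ := fun x =>
  if x ∈ cells lam then
    ((cells lam).filter (fun y => T y < T x ∨ (T y = T x ∧ y.2 < x.2))).card + 1
  else 0

/-- `n` is a descent of the standard tableau `U`: the entry `n+1` lies in a strictly
lower row than the entry `n`. -/
def IsDescent (lam : List ℕ) (U : ℕ × ℕ → ℕ) (n : ℕ) : Prop :=
  ∃ x ∈ cells lam, ∃ y ∈ cells lam, U x = n ∧ U y = n + 1 ∧ x.1 < y.1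

/-- `S(al)`: the set of proper partial sums of the composition `al`. -/
def Sset (al : List ℕ) : Set ℕ := {n | ∃ k, 0 < k ∧ k < al.length ∧ n = (al.take k).sum}

/-- `s ∈ D(T)`: some entry `s+1` of `T` lies in a strictly lower row than some entry `s`. -/
def TabDescent (lam : List ℕ) (T : ℕ × ℕ → ℕ) (s : ℕ) : Prop :=
  ∃ x ∈ cells lam, ∃ y ∈ cells lam, T x = s ∧ T y = s + 1 ∧ x.1 < y.1

/-- The word `w_{T̂}` of `T`: its `u`-th letter (1-based) is the 1-based row index of the
entry `u` of the standardization `T̂` of `T`. -/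
def wordOf (lam : List ℕ) (T : ℕ × ℕ → ℕ) : List ℕ :=
  (List.range lam.sum).map fun n =>
    ∑ x ∈ (cells lam).filter (fun x => stdz lam T x = n + 1), (x.1 + 1)

/-- `j ∈ {2, …, ℓ(al)}` is a critical number of `T ∈ Tab(lam, al)`:
`w_{α_1+⋯+α_{j-1}} = w_{α_1+⋯+α_{j-1}+1}` in the word of `T`. -/
def CriticalNum (lam al : List ℕ) (T : ℕ × ℕ → ℕ) (j : ℕ) : Prop :=
  2 ≤ j ∧ j ≤ al.length ∧
    (wordOf lam T).getD ((al.take (j - 1)).sum - 1) 0 =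
      (wordOf lam T).getD ((al.take (j - 1)).sum) 0

/-- `j ∈ {2, …, ℓ(al)}` is a negligible critical number of `T`:
`w_{α_1+⋯+α_{j-1}} > w_{α_1+⋯+α_{j-1}+1}` in the word of `T`. -/
def NegligibleNum (lam al : List ℕ) (T : ℕ × ℕ → ℕ) (j : ℕ) : Prop :=
  2 ≤ j ∧ j ≤ al.length ∧
    (wordOf lam T).getD ((al.take (j - 1)).sum) 0 <
      (wordOf lam T).getD ((al.take (j - 1)).sum - 1) 0

/-- The overlapping partition of the ribbon encoded by its gap pattern `b`
(`b j = true` iff rows `j` and `j+1`, 0-based, overlap). -/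
def povOf (b : List Bool) : List ℕ :=
  (List.range (b.length + 1)).map fun i => (b.drop i).count true

/-! ### Connected ribbons with rows in arbitrary order -/

/-- Starting column (0-based) of row `i` of the connected ribbon with row lengths `b`. -/
def startConn (b : List ℕ) (i : ℕ) : ℕ := (b.drop (i + 1)).sum + (i + 1) - b.length

/-- Number of columns of the connected ribbon with row lengths `b`. -/
def ncols (b : List ℕ) : ℕ := b.sum + 1 - b.length

/-- Length of column `c` of the connected ribbon with row lengths `b`. -/
def colLen (b : List ℕ) (c : ℕ) : ℕ :=
  ((Finset.range b.length).filter
    (fun i => startConn b i ≤ c ∧ c < startConn b i + b.getD i 0)).card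

/-- Deletion rank of row `j`: the number of rows deleted strictly before row `j` when one
repeatedly deletes a longest remaining row in highest (most northern) position. -/
def delRank (g : List ℕ) (j : ℕ) : ℕ :=
  ((Finset.range g.length).filter
    (fun j' => g.getD j 0 < g.getD j' 0 ∨ (g.getD j' 0 = g.getD j 0 ∧ j' < j))).card

/-- The overlapping partition of the connected ribbon with row lengths `g`:
its `(d+1)`-st entry is the number of length-two columns of the ribbon remaining
after deleting `d` rows as above, i.e. the number of adjacent pairs of surviving rows. -/
def ppiList (g : List ℕ) : List ℕ :=
  (List.range g.length).map fun d =>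
    ((Finset.range (g.length - 1)).filter
      (fun j => d ≤ delRank g j ∧ d ≤ delRank g (j + 1))).card


/-! Order the cells lexicographically by (entry, column). On a column-strict tableau no two
cells agree in both coordinates, so standardization numbers the cells bijectively in this order.
Of two cells with equal entries the one further to the right lies weakly higher, so the word
descends weakly on each block of equal entries, that is, on each row of the ribbon. The cell
above a given cell has a smaller entry and is numbered earlier, so the word is Yamanouchi. Only
the strict ascents required at the shared columns remain, and these are exactly descents of the
standardization. -/

section Lists

theorem sum_range_getD_eq_sum_take {M : Type*} [AddCommMonoid M] (l : List M) (m : ℕ) :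
    ∑ i ∈ Finset.range m, l.getD i 0 = (l.take m).sum := by
  induction m with
  | zero => simp
  | succ m ih =>
    rw [Finset.sum_range_succ, ih, List.take_add_one, List.sum_append, List.getD_eq_getElem?_getD]
    cases l[m]? <;> simp

theorem sum_take_pos {M : Type*} [AddCommMonoid M] [Preorder M] [IsOrderedAddMonoid M]
    {l : List M} (hl : ∀ x ∈ l, 0 < x) (hne : l ≠ []) {k : ℕ} (hk : k ≠ 0) :
    0 < (l.take k).sum :=
  List.sum_pos _ (fun x hx => hl x (List.mem_of_mem_take hx))
    (mt List.take_eq_nil_iff.1 (not_or.2 ⟨hk, hne⟩))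

theorem sum_take_lt_sum {M : Type*} [AddCommMonoid M] [PartialOrder M]
    [IsOrderedCancelAddMonoid M] {l : List M} (hl : ∀ x ∈ l, 0 < x) {k : ℕ}
    (hkl : k < l.length) : (l.take k).sum < l.sum := by
  rw [← List.sum_take_add_sum_drop l k]
  exact lt_add_of_pos_right _ <| List.sum_pos _ (fun x hx => hl x (List.mem_of_mem_drop hx))
    (mt List.drop_eq_nil_iff.1 hkl.not_ge)

theorem antitone_getD {M : Type*} [AddZeroClass M] [Preorder M] [CanonicallyOrderedAdd M]
    {l : List M} (hl : l.Pairwise (· ≥ ·)) : Antitone (l.getD · 0) := by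
  intro i k hik
  rcases lt_or_ge k l.length with hk | hk
  · simpa only [List.getD_eq_getElem _ _ hk, List.getD_eq_getElem _ _ (hik.trans_lt hk)] using!
      hl.rel_get_of_le (a := ⟨i, hik.trans_lt hk⟩) (b := ⟨k, hk⟩) hik
  · simp only [List.getD_eq_default _ _ hk, zero_le]

end Lists

section Rank

variable {ι κ : Type*} [LinearOrder κ] {s : Finset ι} {f : ι → κ}

/-- The rank of `x` in `s` with respect to the key `f`, counted from `0`; elements with equal keys
share a rank. Standardization is such a rank, shifted by one. -/
def rankIn (s : Finset ι) (f : ι → κ) (x : ι) : ℕ := (s.filter (f · < f x)).card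

theorem rankIn_lt_rankIn_iff {x y : ι} (hx : x ∈ s) :
    rankIn s f x < rankIn s f y ↔ f x < f y := by
  refine ⟨fun h => ?_, fun h => Finset.card_lt_card ?_⟩
  · contrapose! h
    exact Finset.card_le_card (Finset.monotone_filter_right s fun _ _ hz => hz.trans_le h)
  · exact (Finset.ssubset_iff_of_subset
      (Finset.monotone_filter_right s fun _ _ hz => hz.trans h)).2 ⟨x, by simp [hx, h], by simp⟩

theorem rankIn_lt_card {x : ι} (hx : x ∈ s) : rankIn s f x < s.card :=
  Finset.card_lt_card (Finset.filter_ssubset.2 ⟨x, hx, lt_irrefl _⟩)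

theorem bijOn_rankIn (hf : Set.InjOn f s) : Set.BijOn (rankIn s f) s (Set.Iio s.card) := by
  have hmaps : Set.MapsTo (rankIn s f) s (Finset.range s.card) := fun x hx =>
    Finset.mem_coe.2 (Finset.mem_range.2 (rankIn_lt_card hx))
  have hinj : Set.InjOn (rankIn s f) s := by
    intro x hx y hy hxy
    refine hf hx hy (le_antisymm ?_ ?_)
    · exact not_lt.1 fun h => hxy.not_gt ((rankIn_lt_rankIn_iff hy).2 h)
    · exact not_lt.1 fun h => hxy.not_lt ((rankIn_lt_rankIn_iff hx).2 h)
  have hsurj := Finset.surjOn_of_injOn_of_card_le _ hmaps hinj (Finset.card_range _).le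
  rw [Finset.coe_range] at hmaps hsurj
  exact ⟨hmaps, hinj, hsurj⟩

end Rank

section Cells

variable {nu : List ℕ}

theorem mem_cells_iff {i c : ℕ} : (i, c) ∈ cells nu ↔ c < nu.getD i 0 := by
  simp only [cells, Finset.mem_filter, Finset.mem_product, Finset.mem_range, and_iff_right_iff_imp]
  intro hc
  have hi : i < nu.length := by
    by_contra! hi
    exact Nat.not_lt_zero c (List.getD_eq_default nu 0 hi ▸ hc)
  rw [List.getD_eq_getElem _ _ hi] at hc
  exact ⟨hi, Nat.lt_succ_of_lt (hc.trans_le (List.le_sum_of_mem (List.getElem_mem hi)))⟩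

theorem card_cells_row (nu : List ℕ) (i : ℕ) :
    ((cells nu).filter (fun x => x.1 = i)).card = nu.getD i 0 := by
  have hrow : (cells nu).filter (fun x => x.1 = i) = {i} ×ˢ Finset.range (nu.getD i 0) := by
    ext ⟨k, c⟩
    simp only [Finset.mem_filter, mem_cells_iff, Finset.mem_product, Finset.mem_singleton,
      Finset.mem_range]
    exact ⟨fun ⟨hc, hk⟩ => ⟨hk, hk ▸ hc⟩, fun ⟨hk, hc⟩ => ⟨hk ▸ hc, hk⟩⟩
  rw [hrow, Finset.card_product, Finset.card_singleton, Finset.card_range, one_mul]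

theorem card_cells (nu : List ℕ) : (cells nu).card = nu.sum := by
  have hmaps : Set.MapsTo Prod.fst (cells nu : Set (ℕ × ℕ)) (Finset.range nu.length) :=
    fun x hx => (Finset.mem_product.1 (Finset.mem_filter.1 hx).1).1
  simp only [Finset.card_eq_sum_card_fiberwise hmaps, card_cells_row, sum_range_getD_eq_sum_take,
    List.take_length]

theorem isLowerSet_cells (hnu : nu.Pairwise (· ≥ ·)) : IsLowerSet (cells nu : Set (ℕ × ℕ)) := by
  rintro ⟨i, c⟩ ⟨k, d⟩ ⟨hki, hdc⟩ hic
  rw [Finset.mem_coe, mem_cells_iff] at hic ⊢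
  exact (hdc.trans_lt hic).trans_le (antitone_getD hnu hki)

end Cells

section Tableaux

variable {nu al : List ℕ} {T : ℕ × ℕ → ℕ}

/-- The row condition of semistandardness: entries of `T` weakly increase along each row of the
diagram of `nu`, stated for adjacent cells. -/
def RowWeak (nu : List ℕ) (T : ℕ × ℕ → ℕ) : Prop :=
  ∀ i c, (i, c + 1) ∈ cells nu → T (i, c) ≤ T (i, c + 1)

/-- The column condition of semistandardness: entries of `T` strictly increase down each column of
the diagram of `nu`, stated for adjacent cells. -/
def ColStrict (nu : List ℕ) (T : ℕ × ℕ → ℕ) : Prop :=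
  ∀ i c, (i + 1, c) ∈ cells nu → T (i, c) < T (i + 1, c)

theorem RowWeak.le (hrow : RowWeak nu T) {i c d : ℕ} (hcd : c ≤ d) (hd : (i, d) ∈ cells nu) :
    T (i, c) ≤ T (i, d) := by
  induction d, hcd using Nat.le_induction with
  | base => rfl
  | succ d _ ih =>
    exact (ih (mem_cells_iff.2 (d.lt_succ_self.trans (mem_cells_iff.1 hd)))).trans (hrow i d hd)

theorem ColStrict.lt (hcol : ColStrict nu T) (hnu : nu.Pairwise (· ≥ ·)) {i k c : ℕ}
    (hik : i < k) (hk : (k, c) ∈ cells nu) : T (i, c) < T (k, c) := by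
  induction k, hik using Nat.le_induction with
  | base => exact hcol i c hk
  | succ k _ ih =>
    have hk' : (k, c) ∈ cells nu := isLowerSet_cells hnu (Prod.mk_le_mk.2 ⟨k.le_succ, le_rfl⟩) hk
    exact (ih hk').trans (hcol k c hk)

/-- The key by which standardization orders the cells: by entry, and from left to right (that is,
from southwest to northeast) among equal entries. -/
def cellKey (T : ℕ × ℕ → ℕ) (x : ℕ × ℕ) : ℕ ×ₗ ℕ := toLex (T x, x.2)

theorem cellKey_lt_cellKey_iff {x y : ℕ × ℕ} :
    cellKey T x < cellKey T y ↔ T x < T y ∨ (T x = T y ∧ x.2 < y.2) :=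
  Prod.Lex.toLex_lt_toLex

theorem ColStrict.injOn_cellKey (hcol : ColStrict nu T) (hnu : nu.Pairwise (· ≥ ·)) :
    Set.InjOn (cellKey T) (cells nu) := by
  rintro ⟨i, c⟩ hx ⟨k, d⟩ hy hxy
  obtain ⟨hT, rfl⟩ : T (i, c) = T (k, d) ∧ c = d := by simpa [cellKey] using hxy
  rcases lt_trichotomy i k with hik | rfl | hki
  · exact absurd hT (hcol.lt hnu hik hy).ne
  · rfl
  · exact absurd hT (hcol.lt hnu hki hx).ne'

theorem stdz_eq_rankIn_add_one {x : ℕ × ℕ} (hx : x ∈ cells nu) :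
    stdz nu T x = rankIn (cells nu) (cellKey T) x + 1 := by
  simp only [stdz, if_pos hx, rankIn, cellKey_lt_cellKey_iff]

theorem stdz_lt_stdz_iff {x y : ℕ × ℕ} (hx : x ∈ cells nu) (hy : y ∈ cells nu) :
    stdz nu T x < stdz nu T y ↔ cellKey T x < cellKey T y := by
  rw [stdz_eq_rankIn_add_one hx, stdz_eq_rankIn_add_one hy, Nat.add_lt_add_iff_right,
    rankIn_lt_rankIn_iff hx]

theorem ColStrict.bijOn_stdz (hcol : ColStrict nu T) (hnu : nu.Pairwise (· ≥ ·)) :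
    Set.BijOn (stdz nu T) (cells nu) (Set.Icc 1 nu.sum) := by
  have hrank := bijOn_rankIn (hcol.injOn_cellKey hnu)
  have hsucc : Set.BijOn (· + 1) (Set.Iio nu.sum) (Set.Icc 1 nu.sum) :=
    ⟨fun n hn => ⟨n.succ_pos, hn⟩, fun m _ n _ => Nat.succ_inj.1,
      fun n ⟨hn1, hnN⟩ => ⟨n - 1, Nat.sub_one_lt_of_le hn1 hnN, Nat.sub_add_cancel hn1⟩⟩
  rw [card_cells] at hrank
  exact (hsucc.comp hrank).congr fun x hx => (stdz_eq_rankIn_add_one hx).symm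

theorem ColStrict.exists_stdz_eq (hcol : ColStrict nu T) (hnu : nu.Pairwise (· ≥ ·)) {n : ℕ}
    (hn : n < nu.sum) : ∃ x ∈ cells nu, stdz nu T x = n + 1 :=
  (hcol.bijOn_stdz hnu).surjOn ⟨n.succ_pos, hn⟩

theorem stdz_le_card_filter_le_iff {x : ℕ × ℕ} (hx : x ∈ cells nu) {m : ℕ} :
    stdz nu T x ≤ ((cells nu).filter (T · ≤ m)).card ↔ T x ≤ m := by
  rw [stdz_eq_rankIn_add_one hx, Nat.succ_le_iff, rankIn]
  simp only [cellKey_lt_cellKey_iff]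
  refine ⟨fun h => ?_, fun h => Finset.card_lt_card ?_⟩
  · contrapose! h
    exact Finset.card_le_card
      (Finset.monotone_filter_right _ fun y _ hy => Or.inl (hy.trans_lt h))
  · refine (Finset.ssubset_iff_of_subset ?_).2 ⟨x, by simp [hx, h], by simp⟩
    exact Finset.monotone_filter_right _ fun y _ hy => by omega

theorem card_filter_le_eq_sum_take (hpos : ∀ x ∈ cells nu, 1 ≤ T x)
    (hcontent : ∀ k, ((cells nu).filter (T · = k + 1)).card = al.getD k 0) (m : ℕ) :
    ((cells nu).filter (T · ≤ m)).card = (al.take m).sum := by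
  have hmaps : Set.MapsTo (T · - 1) ((cells nu).filter (T · ≤ m)) (Finset.range m) := by
    intro x hx
    obtain ⟨hx, hxm⟩ := Finset.mem_filter.1 hx
    have := hpos x hx
    simp only [Finset.coe_range, Set.mem_Iio]
    omega
  rw [Finset.card_eq_sum_card_fiberwise hmaps, ← sum_range_getD_eq_sum_take]
  refine Finset.sum_congr rfl fun k hk => ?_
  rw [← hcontent, Finset.filter_filter]
  refine congrArg Finset.card (Finset.filter_congr fun x hx => ?_)
  have := hpos x hx
  have := Finset.mem_range.1 hk
  omega

theorem row_le_of_stdz_lt (hrow : RowWeak nu T) (hcol : ColStrict nu T)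
    (hnu : nu.Pairwise (· ≥ ·)) {x y : ℕ × ℕ} (hx : x ∈ cells nu) (hy : y ∈ cells nu)
    (hT : T x = T y) (hxy : stdz nu T x < stdz nu T y) : y.1 ≤ x.1 := by
  obtain ⟨r, c⟩ := x
  obtain ⟨s, d⟩ := y
  rw [stdz_lt_stdz_iff hx hy, cellKey_lt_cellKey_iff] at hxy
  have hcd : c < d := (hxy.resolve_left hT.not_lt).2
  by_contra! hrs
  have hmem : (r, d) ∈ cells nu := isLowerSet_cells hnu (Prod.mk_le_mk.2 ⟨hrs.le, le_rfl⟩) hy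
  exact ((hrow.le hcd.le hmem).trans_lt (hcol.lt hnu hrs hy)).ne hT

end Tableaux

section Word

variable {nu al : List ℕ} {T : ℕ × ℕ → ℕ}

theorem length_wordOf (nu : List ℕ) (T : ℕ × ℕ → ℕ) : (wordOf nu T).length = nu.sum := by
  simp only [wordOf, List.length_map, List.length_range]

theorem sum_filter_stdz_eq (hcol : ColStrict nu T) (hnu : nu.Pairwise (· ≥ ·)) {x : ℕ × ℕ}
    {n : ℕ} (hx : x ∈ cells nu) (hxn : stdz nu T x = n) :
    ∑ y ∈ (cells nu).filter (fun y => stdz nu T y = n), (y.1 + 1) = x.1 + 1 := by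
  have hfiber : (cells nu).filter (fun y => stdz nu T y = n) = {x} := by
    refine Finset.eq_singleton_iff_unique_mem.2 ⟨Finset.mem_filter.2 ⟨hx, hxn⟩, fun y hy => ?_⟩
    obtain ⟨hy, hyn⟩ := Finset.mem_filter.1 hy
    exact (hcol.bijOn_stdz hnu).injOn hy hx (hyn.trans hxn.symm)
  rw [hfiber, Finset.sum_singleton]

theorem getD_wordOf (hcol : ColStrict nu T) (hnu : nu.Pairwise (· ≥ ·)) {x : ℕ × ℕ} {n : ℕ}
    (hx : x ∈ cells nu) (hxn : stdz nu T x = n + 1) : (wordOf nu T).getD n 0 = x.1 + 1 := by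
  have hn : n + 1 ≤ nu.sum := hxn ▸ ((hcol.bijOn_stdz hnu).mapsTo hx).2
  rw [List.getD_eq_getElem _ _ (by rwa [length_wordOf])]
  simp only [wordOf, List.getElem_map, List.getElem_range]
  exact sum_filter_stdz_eq hcol hnu hx hxn

theorem coe_take_wordOf (hcol : ColStrict nu T) (hnu : nu.Pairwise (· ≥ ·)) (k : ℕ) :
    ((wordOf nu T).take k : Multiset ℕ) =
      ((cells nu).filter (stdz nu T · ≤ k)).val.map (fun x => x.1 + 1) := by
  have hbij := hcol.bijOn_stdz hnu
  rw [wordOf, ← List.map_take, List.take_range, ← Multiset.map_coe, ← Multiset.range]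
  symm
  refine Multiset.map_eq_map_of_bij_of_nodup _ _ (Finset.nodup _) (Multiset.nodup_range _)
    (fun x _ => stdz nu T x - 1) ?_ ?_ ?_ ?_
  · intro x hx
    obtain ⟨hx, hxk⟩ := Finset.mem_filter.1 hx
    obtain ⟨hx1, hxN⟩ := hbij.mapsTo hx
    rw [Multiset.mem_range]
    omega
  · intro x hx y hy hxy
    have hx := (Finset.mem_filter.1 hx).1
    have hy := (Finset.mem_filter.1 hy).1
    have hx1 := (hbij.mapsTo hx).1
    have hy1 := (hbij.mapsTo hy).1
    exact hbij.injOn hx hy (by omega)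
  · intro n hn
    rw [Multiset.mem_range, lt_min_iff] at hn
    obtain ⟨x, hx, hxn⟩ := hcol.exists_stdz_eq hnu hn.2
    exact ⟨x, Finset.mem_filter.2 ⟨hx, hxn.trans_le hn.1⟩, by rw [hxn, Nat.add_sub_cancel]⟩
  · intro x hx
    have hx := (Finset.mem_filter.1 hx).1
    exact (sum_filter_stdz_eq hcol hnu hx (Nat.sub_add_cancel (hbij.mapsTo hx).1).symm).symm

theorem count_take_wordOf (hcol : ColStrict nu T) (hnu : nu.Pairwise (· ≥ ·)) (k j : ℕ) :
    ((wordOf nu T).take k).count (j + 1) =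
      ((cells nu).filter (fun x => stdz nu T x ≤ k ∧ x.1 = j)).card := by
  rw [← Multiset.coe_count, coe_take_wordOf hcol hnu, Multiset.count_map, ← Finset.filter_val,
    Finset.card_val, Finset.filter_filter]
  simp only [Nat.add_right_cancel_iff, eq_comm]

theorem isYam_wordOf (hcol : ColStrict nu T) (hnu : nu.Pairwise (· ≥ ·)) :
    IsYam (wordOf nu T) := by
  intro k j
  rw [count_take_wordOf hcol hnu, count_take_wordOf hcol hnu]
  refine Finset.card_le_card_of_injOn (fun x => (j, x.2)) ?_ ?_
  · rintro ⟨i, c⟩ hx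
    obtain ⟨hx, hk, rfl⟩ : (i, c) ∈ cells nu ∧ stdz nu T (i, c) ≤ k ∧ i = j + 1 := by
      simpa using hx
    have hup : (j, c) ∈ cells nu := isLowerSet_cells hnu (Prod.mk_le_mk.2 ⟨j.le_succ, le_rfl⟩) hx
    have hlt : stdz nu T (j, c) < stdz nu T (j + 1, c) :=
      (stdz_lt_stdz_iff hup hx).2 (cellKey_lt_cellKey_iff.2 (Or.inl (hcol j c hx)))
    simpa using ⟨hup, hlt.le.trans hk⟩
  · rintro ⟨i, c⟩ hx ⟨i', c'⟩ hy hxy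
    simp_all

theorem hasContent_wordOf (hcol : ColStrict nu T) (hnu : nu.Pairwise (· ≥ ·)) :
    HasContent (wordOf nu T) nu := by
  have htake : (wordOf nu T).take nu.sum = wordOf nu T :=
    List.take_of_length_le (length_wordOf nu T).le
  have hfilter : (cells nu).filter (stdz nu T · ≤ nu.sum) = cells nu :=
    Finset.filter_true_of_mem fun x hx => ((hcol.bijOn_stdz hnu).mapsTo hx).2
  constructor
  · intro j
    rw [← htake, count_take_wordOf hcol hnu, ← Finset.filter_filter, hfilter, card_cells_row]
  · rw [← htake, ← Multiset.coe_count, coe_take_wordOf hcol hnu, Multiset.count_eq_zero]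
    simp

theorem getD_wordOf_succ_le (hrow : RowWeak nu T) (hcol : ColStrict nu T)
    (hnu : nu.Pairwise (· ≥ ·)) (hpos : ∀ x ∈ cells nu, 1 ≤ T x)
    (hcontent : ∀ k, ((cells nu).filter (T · = k + 1)).card = al.getD k 0) {i n : ℕ}
    (hin : (al.take i).sum ≤ n) (hni : n + 1 < (al.take (i + 1)).sum) :
    (wordOf nu T).getD (n + 1) 0 ≤ (wordOf nu T).getD n 0 := by
  have hcard := card_filter_le_eq_sum_take hpos hcontent
  have hsum : (al.take (i + 1)).sum ≤ nu.sum := by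
    rw [← hcard, ← card_cells]
    exact Finset.card_filter_le _ _
  have hentry : ∀ x ∈ cells nu, (al.take i).sum < stdz nu T x →
      stdz nu T x ≤ (al.take (i + 1)).sum → T x = i + 1 := by
    intro x hx hlo hhi
    rw [← hcard, stdz_le_card_filter_le_iff hx] at hhi
    rw [← hcard, ← not_le, stdz_le_card_filter_le_iff hx] at hlo
    omega
  obtain ⟨x, hx, hxn⟩ := hcol.exists_stdz_eq hnu (show n < nu.sum by omega)
  obtain ⟨y, hy, hyn⟩ := hcol.exists_stdz_eq hnu (show n + 1 < nu.sum by omega)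
  have hTxy : T x = T y :=
    (hentry x hx (by omega) (by omega)).trans (hentry y hy (by omega) (by omega)).symm
  rw [getD_wordOf hcol hnu hx hxn, getD_wordOf hcol hnu hy hyn]
  exact Nat.succ_le_succ (row_le_of_stdz_lt hrow hcol hnu hx hy hTxy (by omega))

theorem isDescent_stdz_iff (hcol : ColStrict nu T) (hnu : nu.Pairwise (· ≥ ·)) {n : ℕ}
    (h0 : 0 < n) (hn : n < nu.sum) :
    IsDescent nu (stdz nu T) n ↔ (wordOf nu T).getD (n - 1) 0 < (wordOf nu T).getD n 0 := by
  obtain ⟨m, rfl⟩ := Nat.exists_eq_add_one.2 h0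
  rw [Nat.add_sub_cancel]
  constructor
  · rintro ⟨x, hx, y, hy, hxm, hym, hlt⟩
    rw [getD_wordOf hcol hnu hx hxm, getD_wordOf hcol hnu hy hym]
    exact Nat.succ_lt_succ hlt
  · intro h
    obtain ⟨x, hx, hxm⟩ := hcol.exists_stdz_eq hnu (m.lt_succ_self.trans hn)
    obtain ⟨y, hy, hym⟩ := hcol.exists_stdz_eq hnu hn
    rw [getD_wordOf hcol hnu hx hxm, getD_wordOf hcol hnu hy hym] at h
    exact ⟨x, hx, y, hy, hxm, hym, Nat.lt_of_succ_lt_succ h⟩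

end Word

/-- Proposition `l2new`: for `T ∈ Tab(nu, al)` and a ribbon with row
lengths `al` and gap-overlap pattern `ov`, the filling `φ_{R_al}(T)` of the ribbon whose
reading word is `w_{T̂}` is an LR tableau of content `nu` iff, whenever rows `j` and `j+1`
of the ribbon share a column, `al₁+⋯+al_j` is a descent of `T̂`. -/
theorem companion_filling_is_LR_iff_descents
    (nu al : List ℕ) (hnu : IsPartition nu) (hal : ∀ x ∈ al, 0 < x)
    (hsum : al.sum = nu.sum) (ov : ℕ → Bool) (T : ℕ × ℕ → ℕ) (hT : IsTab nu al T) :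
    (IsRibbonWord al ov (wordOf nu T) ∧ IsYam (wordOf nu T) ∧
        HasContent (wordOf nu T) nu) ↔
      ∀ g, g + 1 < al.length → ov g = true →
        IsDescent nu (stdz nu T) ((al.take (g + 1)).sum) := by
  obtain ⟨-, hpos, hrow, hcol, hcontent⟩ := hT
  have hlength : (wordOf nu T).length = al.sum := (length_wordOf nu T).trans hsum.symm
  have hrows : ∀ i j, i < al.length → j + 1 < al.getD i 0 →
      (wordOf nu T).getD (rowOffset al i + j + 1) 0 ≤
        (wordOf nu T).getD (rowOffset al i + j) 0 := by
    intro i j hi hj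
    refine getD_wordOf_succ_le hrow hcol hnu.1 hpos hcontent (Nat.le_add_right _ j) ?_
    rw [List.getD_eq_getElem _ _ hi] at hj
    rw [List.sum_take_succ _ _ hi, rowOffset]
    omega
  have hdescent : ∀ g, g + 1 < al.length → (IsDescent nu (stdz nu T) (al.take (g + 1)).sum ↔
      (wordOf nu T).getD (rowOffset al (g + 1) - 1) 0 <
        (wordOf nu T).getD (rowOffset al (g + 1)) 0) := fun g hg =>
    isDescent_stdz_iff hcol hnu.1
      (sum_take_pos hal (List.ne_nil_of_length_pos hg.pos) g.succ_ne_zero)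
      (hsum ▸ sum_take_lt_sum hal hg)
  rw [and_iff_left ⟨isYam_wordOf hcol hnu.1, hasContent_wordOf hcol hnu.1⟩]
  exact ⟨fun h g hg hov => (hdescent g hg).2 (h.2.2 g hg hov),
    fun h => ⟨hlength, hrows, fun g hg hov => (hdescent g hg).1 (h g hg hov)⟩⟩

end RibbonSupport
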